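/- Let F be an orientation-preserving C^r-diffeomorphism (r ≥ 2) from a domain Ω ⊆ ℝ² onto its image F(Ω) ⊆ Ω, and let Λ ⊆ Ω be a compact totally invariant set such that F restricted to Λ is uniquely ergodic, with unique invariant Borel probability measure μ. Suppose λ ∈ (0,1) satisfies ∫_Λ log Jac_pF dμ(p) = log λ, and that for μ-almost every p ∈ Λ, lim_{n→∞} (1/n) log ‖D_pF^n‖ = 0. Then for every η > 0 there exists N ∈ ℕ such that for all n ≥ N the map F^n is η-homogeneous on Λ with rate λ^n: for every p ∈ Λ and every direction E at p, (λ^n)^{1+η} < ‖D_pF^n|_E‖ < (λ^n)^{−η} and (λ^n)^{1+η} < Jac_pF^n < (λ^n)^{1−η}. -/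

import Mathlib

open Real Function Set Filter MeasureTheory

noncomputable section

/-- The Euclidean plane `ℝ²` with the Euclidean norm. -/
abbrev E2 := EuclideanSpace ℝ (Fin 2)

/-- The Jacobian determinant of `F` at `p`. -/
def jacAt (F : E2 → E2) (p : E2) : ℝ :=
  LinearMap.det (fderiv ℝ F p).toLinearMap

/-- The angle between the directions (lines) spanned by the unit vectors `u` and `v`. -/
def lineAngle (u v : E2) : ℝ :=
  Real.arccos |(@inner ℝ E2 _ u v)|

/-- The unit vector spanning the image under `T` of the direction spanned by `v`. -/
def pushDir (T : E2 →L[ℝ] E2) (v : E2) : E2 :=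
  ‖T v‖⁻¹ • T v

/-- The `m`-th iterate (`m : ℤ`), computed using `F` forwards and its inverse `G` backwards. -/
def iterZ (F G : E2 → E2) (m : ℤ) : E2 → E2 :=
  if 0 ≤ m then F^[m.toNat] else G^[(-m).toNat]

/-- `p` is `N`-times forward `(L, ε)_v`-regular along the direction of the unit vector `v`:
`L⁻¹ λ^((1+ε)n) ≤ (Jac_p Fⁿ)^s / ‖D_pFⁿ|_E‖^(s-1) ≤ L λ^((1-ε)n)` for `s ∈ {-r, r-1}`,
`1 ≤ n ≤ N`. -/
def FwdRegV (F : E2 → E2) (p : E2) (lam L ε : ℝ) (r : ℕ) (N : ℕ∞) (v : E2) : Prop :=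
  ∀ n : ℕ, 1 ≤ n → (n : ℕ∞) ≤ N → ∀ s : ℤ, s = -(r : ℤ) ∨ s = (r : ℤ) - 1 →
    L⁻¹ * lam ^ ((1 + ε) * (n : ℝ)) ≤
        jacAt (F^[n]) p ^ s / ‖fderiv ℝ (F^[n]) p v‖ ^ (s - 1) ∧
      jacAt (F^[n]) p ^ s / ‖fderiv ℝ (F^[n]) p v‖ ^ (s - 1) ≤
        L * lam ^ ((1 - ε) * (n : ℝ))

/-- `p` is `N`-times forward `(L, ε)_h`-regular along the direction of the unit vector `v`:
`L⁻¹ λ^((1+ε)n) ≤ Jac_p Fⁿ / ‖D_pFⁿ|_E‖^(s+1) ≤ L λ^((1-ε)n)` for `s ∈ {-r+1, r}`,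
`1 ≤ n ≤ N`. -/
def FwdRegH (F : E2 → E2) (p : E2) (lam L ε : ℝ) (r : ℕ) (N : ℕ∞) (v : E2) : Prop :=
  ∀ n : ℕ, 1 ≤ n → (n : ℕ∞) ≤ N → ∀ s : ℤ, s = -(r : ℤ) + 1 ∨ s = (r : ℤ) →
    L⁻¹ * lam ^ ((1 + ε) * (n : ℝ)) ≤
        jacAt (F^[n]) p / ‖fderiv ℝ (F^[n]) p v‖ ^ (s + 1) ∧
      jacAt (F^[n]) p / ‖fderiv ℝ (F^[n]) p v‖ ^ (s + 1) ≤
        L * lam ^ ((1 - ε) * (n : ℝ))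

/-- `p` is `M`-times backward `(L, ε)_v`-regular along the direction of the unit vector `v`;
the backward iterates `F^(-n)` are given by the iterates of the inverse map `G`. -/
def BwdRegV (G : E2 → E2) (p : E2) (lam L ε : ℝ) (r : ℕ) (M : ℕ∞) (v : E2) : Prop :=
  ∀ n : ℕ, 1 ≤ n → (n : ℕ∞) ≤ M → ∀ s : ℤ, s = -(r : ℤ) ∨ s = (r : ℤ) - 1 →
    L⁻¹ * lam ^ (-(1 - ε) * (n : ℝ)) ≤
        jacAt (G^[n]) p ^ s / ‖fderiv ℝ (G^[n]) p v‖ ^ (s - 1) ∧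
      jacAt (G^[n]) p ^ s / ‖fderiv ℝ (G^[n]) p v‖ ^ (s - 1) ≤
        L * lam ^ (-(1 + ε) * (n : ℝ))

/-- `p` is `M`-times backward `(L, ε)_h`-regular along the direction of the unit vector `v`. -/
def BwdRegH (G : E2 → E2) (p : E2) (lam L ε : ℝ) (r : ℕ) (M : ℕ∞) (v : E2) : Prop :=
  ∀ n : ℕ, 1 ≤ n → (n : ℕ∞) ≤ M → ∀ s : ℤ, s = -(r : ℤ) + 1 ∨ s = (r : ℤ) →
    L⁻¹ * lam ^ (-(1 - ε) * (n : ℝ)) ≤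
        jacAt (G^[n]) p / ‖fderiv ℝ (G^[n]) p v‖ ^ (s + 1) ∧
      jacAt (G^[n]) p / ‖fderiv ℝ (G^[n]) p v‖ ^ (s + 1) ≤
        L * lam ^ (-(1 + ε) * (n : ℝ))

/-- `F` is `η`-homogeneous on `Λ` with rate `lam`. -/
def Homog (F : E2 → E2) (Λ : Set E2) (lam η : ℝ) : Prop :=
  ∀ p ∈ Λ,
    (∀ v : E2, ‖v‖ = 1 →
      lam ^ (1 + η) < ‖fderiv ℝ F p v‖ ∧ ‖fderiv ℝ F p v‖ < lam ^ (-η)) ∧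
    lam ^ (1 + η) < jacAt F p ∧ jacAt F p < lam ^ (1 - η)

/-- Simplified (homogeneous) forward `(L, δ)_v`-regularity:
`‖D_pFⁿ|_E‖ ≤ L λ^((1-δ)n)` for `1 ≤ n ≤ N`. -/
def SFwdV (F : E2 → E2) (p : E2) (lam L δ : ℝ) (N : ℕ∞) (v : E2) : Prop :=
  ∀ n : ℕ, 1 ≤ n → (n : ℕ∞) ≤ N →
    ‖fderiv ℝ (F^[n]) p v‖ ≤ L * lam ^ ((1 - δ) * (n : ℝ))

/-- Simplified (homogeneous) backward `(L, δ)_v`-regularity: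
`‖D_pF^(-n)|_E‖ ≥ L⁻¹ λ^(-(1-δ)n)` for `1 ≤ n ≤ M`. -/
def SBwdV (G : E2 → E2) (p : E2) (lam L δ : ℝ) (M : ℕ∞) (v : E2) : Prop :=
  ∀ n : ℕ, 1 ≤ n → (n : ℕ∞) ≤ M →
    L⁻¹ * lam ^ (-(1 - δ) * (n : ℝ)) ≤ ‖fderiv ℝ (G^[n]) p v‖

/-- Simplified (homogeneous) forward `(L, δ)_h`-regularity:
`‖D_pFⁿ|_E‖ ≥ L⁻¹ λ^(δn)` for `1 ≤ n ≤ N`. -/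
def SFwdH (F : E2 → E2) (p : E2) (lam L δ : ℝ) (N : ℕ∞) (v : E2) : Prop :=
  ∀ n : ℕ, 1 ≤ n → (n : ℕ∞) ≤ N →
    L⁻¹ * lam ^ (δ * (n : ℝ)) ≤ ‖fderiv ℝ (F^[n]) p v‖

/-- Simplified (homogeneous) backward `(L, δ)_h`-regularity:
`‖D_pF^(-n)|_E‖ ≤ L λ^(-δn)` for `1 ≤ n ≤ M`. -/
def SBwdH (G : E2 → E2) (p : E2) (lam L δ : ℝ) (M : ℕ∞) (v : E2) : Prop :=
  ∀ n : ℕ, 1 ≤ n → (n : ℕ∞) ≤ M →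
    ‖fderiv ℝ (G^[n]) p v‖ ≤ L * lam ^ (-δ * (n : ℝ))

/-!
Unique ergodicity turns statements about the single measure `μ` into statements that are uniform
on `Λ`. Every limit of the empirical measures of longer and longer orbit segments in `Λ` is
invariant, hence equal to `μ`, so the Birkhoff averages of a continuous function converge uniformly
to its integral. For `log Jac F` this gives `|log Jac_p Fⁿ - n log λ| < n ε`, uniformly in `p`, once
`n` is large.

For the subadditive cocycle `log ‖D_p Fⁿ‖`, whose growth rate is `0` almost everywhere, fix `m` with
`∫ log ‖D_p Fᵐ‖ dμ < m ε`. Averaging over the `m` ways to cut an orbit segment into blocks of length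
`m` bounds the cocycle by a Birkhoff sum of `(1/m) log ‖DFᵐ‖` up to a constant, hence by `n ε`,
again uniformly.

Homogeneity along all directions follows because the plane has dimension two: Hadamard's inequality
`|det A| ≤ ‖A v‖ ‖A‖` for unit vectors `v` bounds the contraction of `DFⁿ` from below by
`Jac Fⁿ / ‖DFⁿ‖`.
-/

section UniformBirkhoff

open BoundedContinuousFunction Topology

theorem birkhoffAverage_comp_of_semiconj {X Y E : Type*} (𝕜 : Type*) [DivisionSemiring 𝕜]
    [AddCommMonoid E] [Module 𝕜 E] {T : X → X} {S : Y → Y} {φ : X → Y}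
    (h : Semiconj φ T S) (g : Y → E) (n : ℕ) (x : X) :
    birkhoffAverage 𝕜 T (g ∘ φ) n x = birkhoffAverage 𝕜 S g n (φ x) := by
  simp only [birkhoffAverage, birkhoffSum, comp_apply, (h.iterate_right _).eq]

theorem tendsto_birkhoffAverage_apply_sub_birkhoffAverage_of_tendsto {X E ι : Type*}
    (𝕜 : Type*) [RCLike 𝕜] [NormedAddCommGroup E] [NormedSpace 𝕜 E] {g : X → E}
    (hg : Bornology.IsBounded (range g)) (T : X → X) {l : Filter ι} {n : ι → ℕ}
    (hn : Tendsto n l atTop) (x : ι → X) :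
    Tendsto (fun i ↦ birkhoffAverage 𝕜 T g (n i) (T (x i)) - birkhoffAverage 𝕜 T g (n i) (x i))
      l (𝓝 0) := by
  obtain ⟨C, hC⟩ := Metric.isBounded_range_iff.1 hg
  have hCn : Tendsto (fun i ↦ C / n i) l (𝓝 0) :=
    tendsto_const_nhds.div_atTop (tendsto_natCast_atTop_atTop.comp hn)
  refine squeeze_zero_norm (fun i ↦ ?_) hCn
  rw [← dist_eq_norm, dist_birkhoffAverage_apply_birkhoffAverage]
  gcongr
  exact hC _ _

variable {X : Type*} [TopologicalSpace X] [MeasurableSpace X] [BorelSpace X]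

theorem exists_probabilityMeasure_integral_eq_birkhoffAverage (T : X → X) {n : ℕ} (hn : n ≠ 0)
    (x : X) : ∃ P : ProbabilityMeasure X, ∀ g : X →ᵇ ℝ,
      ∫ y, g y ∂(P : Measure X) = birkhoffAverage ℝ T g n x := by
  have hn' : (n : ENNReal) ≠ 0 := Nat.cast_ne_zero.2 hn
  refine ⟨⟨(n : ENNReal)⁻¹ • ∑ k ∈ Finset.range n, Measure.dirac (T^[k] x), ⟨?_⟩⟩, fun g ↦ ?_⟩
  · simp [ENNReal.inv_mul_cancel hn' (ENNReal.natCast_ne_top n)]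
  · have hg : StronglyMeasurable g := g.continuous.stronglyMeasurable
    rw [ProbabilityMeasure.coe_mk, integral_smul_measure,
      integral_finsetSum_measure fun k _ ↦ integrable_dirac' hg (by simp)]
    simp [birkhoffAverage, birkhoffSum, integral_dirac' _ _ hg]

theorem measurePreserving_of_tendsto_of_integral_eq_birkhoffAverage [HasOuterApproxClosed X]
    {ι : Type*} {l : Filter ι} [l.NeBot] {T : X → X} (hT : Continuous T)
    {P : ι → ProbabilityMeasure X} {ν : ProbabilityMeasure X} (hP : Tendsto P l (𝓝 ν))
    {n : ι → ℕ} (hn : Tendsto n l atTop) {x : ι → X}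
    (h : ∀ᶠ i in l, ∀ g : X →ᵇ ℝ,
      ∫ y, g y ∂(P i : Measure X) = birkhoffAverage ℝ T g (n i) (x i)) :
    MeasurePreserving T ν ν := by
  have hlim (g : X →ᵇ ℝ) : Tendsto (fun i ↦ birkhoffAverage ℝ T g (n i) (x i)) l
      (𝓝 (∫ y, g y ∂(ν : Measure X))) :=
    (ProbabilityMeasure.tendsto_iff_forall_integral_tendsto.1 hP g).congr'
      (h.mono fun _ hi ↦ hi g)
  have : IsProbabilityMeasure ((ν : Measure X).map T) :=
    Measure.isProbabilityMeasure_map hT.aemeasurable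
  refine ⟨hT.measurable, ext_of_forall_integral_eq_of_IsFiniteMeasure fun g ↦ ?_⟩
  rw [integral_map hT.aemeasurable g.continuous.aestronglyMeasurable, ← sub_eq_zero]
  refine tendsto_nhds_unique ((hlim (g.compContinuous ⟨T, hT⟩)).sub (hlim g)) ?_
  refine (tendsto_birkhoffAverage_apply_sub_birkhoffAverage_of_tendsto ℝ g.isBounded_range T hn
    x).congr fun i ↦ ?_
  rw [← birkhoffAverage_comp_of_semiconj ℝ (T := T) (φ := T) (fun _ ↦ rfl)]
  rfl

theorem tendstoUniformly_birkhoffAverage [CompactSpace X] [T2Space X] [HasOuterApproxClosed X]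
    {T : X → X} (hT : Continuous T) {g : X → ℝ} (hg : Continuous g) {c : ℝ}
    (hc : ∀ ν : Measure X, IsProbabilityMeasure ν → MeasurePreserving T ν ν → ∫ y, g y ∂ν = c) :
    TendstoUniformly (birkhoffAverage ℝ T g) (fun _ ↦ c) atTop := by
  rw [tendstoUniformly_iff_tendsto, ← Uniform.tendsto_nhds_right, tendsto_iff_ultrafilter]
  intro u hu
  have : Nonempty (ProbabilityMeasure X) := by
    obtain ⟨⟨-, x⟩⟩ := nonempty_of_neBot (u : Filter (ℕ × X))
    exact ⟨⟨Measure.dirac x, inferInstance⟩⟩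
  choose! P hP using fun (q : ℕ × X) (hq : q.1 ≠ 0) ↦
    exists_probabilityMeasure_integral_eq_birkhoffAverage T hq q.2
  have hfst : Tendsto Prod.fst (u : Filter (ℕ × X)) atTop := tendsto_fst.mono_left hu
  have hPu : ∀ᶠ q in (u : Filter (ℕ × X)), ∀ f : X →ᵇ ℝ,
      ∫ y, f y ∂(P q : Measure X) = birkhoffAverage ℝ T f q.1 q.2 :=
    (hfst.eventually_ne_atTop 0).mono hP
  have hlim : Tendsto P u (𝓝 (u.map P).lim) := (u.map P).le_nhds_lim
  have hinv := measurePreserving_of_tendsto_of_integral_eq_birkhoffAverage hT hlim hfst hPu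
  rw [← hc _ inferInstance hinv]
  let g' : X →ᵇ ℝ := mkOfCompact ⟨g, hg⟩
  exact (ProbabilityMeasure.tendsto_iff_forall_integral_tendsto.1 hlim g').congr'
    (hPu.mono fun _ hq ↦ hq g')

end UniformBirkhoff

section UniqueErgodicity

variable {X : Type*} [MeasurableSpace X]

/-- The map `F` is uniquely ergodic on `s`, with invariant probability measure `μ`. Invariance is
phrased through preimages because `F` is only meaningful near `s` and need not be measurable. -/
structure UniquelyErgodicOn (F : X → X) (s : Set X) (μ : Measure X) : Prop where
  isProbabilityMeasure : IsProbabilityMeasure μ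
  measure_compl : μ sᶜ = 0
  measure_preimage : ∀ t, MeasurableSet t → μ (F ⁻¹' t) = μ t
  eq_of_invariant : ∀ ν : Measure X, IsProbabilityMeasure ν → ν sᶜ = 0 →
    (∀ t, MeasurableSet t → ν (F ⁻¹' t) = ν t) → ν = μ

namespace UniquelyErgodicOn

variable {F : X → X} {s : Set X} {μ : Measure X}

theorem ae_mem (h : UniquelyErgodicOn F s μ) : ∀ᵐ x ∂μ, x ∈ s :=
  mem_ae_iff.2 h.measure_compl

theorem map_val_eq (h : UniquelyErgodicOn F s μ) (hs : MeasurableSet s) (hF : MapsTo F s s)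
    {ν : Measure s} [IsProbabilityMeasure ν] (hν : MeasurePreserving (hF.restrict F s s) ν ν) :
    ν.map Subtype.val = μ := by
  have hval := MeasurableEmbedding.subtype_coe hs
  refine h.eq_of_invariant _ (Measure.isProbabilityMeasure_map hval.measurable.aemeasurable) ?_
    fun t ht ↦ ?_
  · simp [hval.map_apply]
  · rw [hval.map_apply, hval.map_apply, ← hν.measure_preimage
      (hval.measurable ht).nullMeasurableSet]
    rfl

variable [TopologicalSpace X] [BorelSpace X]

theorem tendstoUniformlyOn_birkhoffAverage [TopologicalSpace.MetrizableSpace X]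
    (h : UniquelyErgodicOn F s μ) (hs : IsCompact s) (hmaps : MapsTo F s s)
    (hF : ContinuousOn F s) {g : X → ℝ} (hg : ContinuousOn g s) :
    TendstoUniformlyOn (birkhoffAverage ℝ F g) (fun _ ↦ ∫ y, g y ∂μ) atTop s := by
  have : CompactSpace s := isCompact_iff_compactSpace.1 hs
  have hsemi : Semiconj Subtype.val (hmaps.restrict F s s) F := fun _ ↦ rfl
  have hintegral (ν : Measure s) (_ : IsProbabilityMeasure ν)
      (hν : MeasurePreserving (hmaps.restrict F s s) ν ν) :
      ∫ y, (g ∘ Subtype.val) y ∂ν = ∫ y, g y ∂μ := by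
    rw [← h.map_val_eq hs.measurableSet hmaps hν,
      (MeasurableEmbedding.subtype_coe hs.measurableSet).integral_map]
    rfl
  have hunif := tendstoUniformly_birkhoffAverage (hF.mapsToRestrict hmaps) hg.domRestrict hintegral
  rw [tendstoUniformlyOn_iff_tendstoUniformly_comp_coe]
  convert hunif using 1
  · funext n x
    exact (birkhoffAverage_comp_of_semiconj ℝ hsemi g n x).symm
  · rfl

theorem integrable_of_continuousOn (h : UniquelyErgodicOn F s μ) [T2Space X]
    (hs : IsCompact s) {g : X → ℝ} (hg : ContinuousOn g s) : Integrable g μ := by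
  have := h.isProbabilityMeasure
  rw [← Measure.restrict_eq_self_of_ae_mem h.ae_mem]
  exact hg.integrableOn_compact hs

end UniquelyErgodicOn

end UniqueErgodicity

section SubadditiveCocycle

open Topology

variable {X : Type*} {F : X → X} {s : Set X} {f : ℕ → X → ℝ}

/-- The functions `f n` form a subadditive cocycle over `F` along the orbits starting in `s`; the
model case is `f n x = log ‖D_x Fⁿ‖`. -/
def SubadditiveCocycleOn (F : X → X) (s : Set X) (f : ℕ → X → ℝ) : Prop :=
  ∀ m n, ∀ x ∈ s, f (m + n) x ≤ f m x + f n (F^[m] x)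

namespace SubadditiveCocycleOn

theorem apply_le_mul (hf : SubadditiveCocycleOn F s f) (hmaps : MapsTo F s s) {K : ℝ}
    (hK : ∀ x ∈ s, f 1 x ≤ K) {n : ℕ} (hn : 1 ≤ n) {x : X} (hx : x ∈ s) : f n x ≤ n * K := by
  induction n, hn using Nat.le_induction with
  | base => simpa using hK x hx
  | succ n _ ih =>
    push_cast
    linarith [hf n 1 x hx, hK _ (hmaps.iterate n hx)]

-- Passing from `n + 1` to `n` and from `x` to `F x` shifts the sum by one index, so that only
-- the two boundary terms `f (m + (n + 1)) x` and `f (n + 1) (F^[m] x)` fail to cancel.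
theorem sum_iterate_succ_le (hf : SubadditiveCocycleOn F s f) (m n : ℕ) {x : X} (hx : x ∈ s) :
    ∑ j ∈ Finset.range m, f (n + 1 + (m - j)) (F^[j] x) ≤
      f m x + ∑ j ∈ Finset.range m, f (n + (m - j)) (F^[j] (F x)) := by
  set g : ℕ → ℝ := fun j ↦ f (n + 1 + (m - j)) (F^[j] x) with hg
  have hshift : ∑ j ∈ Finset.range m, f (n + (m - j)) (F^[j] (F x)) =
      ∑ j ∈ Finset.range m, g (j + 1) := by
    refine Finset.sum_congr rfl fun j hj ↦ ?_
    have hj : n + (m - j) = n + 1 + (m - (j + 1)) := by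
      have := Finset.mem_range.1 hj
      omega
    rw [hj, ← iterate_succ_apply]
  have htelescope := (Finset.sum_range_succ g m).symm.trans (Finset.sum_range_succ' g m)
  have hboundary : g 0 ≤ f m x + g m := by
    simpa [hg, add_comm] using hf m (n + 1) x hx
  rw [hshift]
  linarith

theorem sum_iterate_le (hf : SubadditiveCocycleOn F s f) (hmaps : MapsTo F s s) {m : ℕ} {C : ℝ}
    (hC : ∀ k ≤ m, ∀ x ∈ s, f k x ≤ C) (n : ℕ) {x : X} (hx : x ∈ s) :
    ∑ j ∈ Finset.range m, f (n + (m - j)) (F^[j] x) ≤ birkhoffSum F (f m) n x + m * C := by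
  induction n generalizing x with
  | zero =>
    calc ∑ j ∈ Finset.range m, f (0 + (m - j)) (F^[j] x)
        ≤ ∑ _j ∈ Finset.range m, C :=
          Finset.sum_le_sum fun j _ ↦ hC _ (by omega) _ (hmaps.iterate j hx)
      _ = birkhoffSum F (f m) 0 x + m * C := by simp
  | succ n ih =>
    rw [birkhoffSum_succ']
    linarith [hf.sum_iterate_succ_le m n hx, ih (hmaps hx)]

theorem mul_apply_add_le (hf : SubadditiveCocycleOn F s f) (hmaps : MapsTo F s s) {m : ℕ} {C : ℝ}
    (hC : ∀ k ≤ m, ∀ x ∈ s, f k x ≤ C) (n : ℕ) {x : X} (hx : x ∈ s) :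
    m * f (n + m) x ≤ birkhoffSum F (f m) n x + 2 * (m * C) := by
  have hsplit (j : ℕ) (hj : j ∈ Finset.range m) :
      f (n + m) x ≤ C + f (n + (m - j)) (F^[j] x) := by
    have hjm := (Finset.mem_range.1 hj).le
    have hsub := hf j (n + (m - j)) x hx
    rw [show j + (n + (m - j)) = n + m by omega] at hsub
    linarith [hC j hjm x hx]
  calc m * f (n + m) x = ∑ _j ∈ Finset.range m, f (n + m) x := by simp
    _ ≤ ∑ j ∈ Finset.range m, (C + f (n + (m - j)) (F^[j] x)) := Finset.sum_le_sum hsplit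
    _ = m * C + ∑ j ∈ Finset.range m, f (n + (m - j)) (F^[j] x) := by
      simp [Finset.sum_add_distrib]
    _ ≤ birkhoffSum F (f m) n x + 2 * (m * C) := by linarith [hf.sum_iterate_le hmaps hC n hx]

-- Truncating `f n / n` below at `a` makes dominated convergence applicable, since a subadditive
-- cocycle has only a linear upper bound.
theorem exists_integral_lt [MeasurableSpace X] {μ : Measure X} [IsProbabilityMeasure μ]
    (hf : SubadditiveCocycleOn F s f) (hmaps : MapsTo F s s) (hs : ∀ᵐ x ∂μ, x ∈ s)
    (hint : ∀ n, Integrable (f n) μ) {K : ℝ} (hK : ∀ x ∈ s, f 1 x ≤ K) {a c : ℝ}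
    (hlim : ∀ᵐ x ∂μ, Tendsto (fun n ↦ f n x / n) atTop (𝓝 a)) (hac : a < c) :
    ∃ m ≠ 0, ∫ x, f m x ∂μ < m * c := by
  have hmax : Tendsto (fun n : ℕ ↦ ∫ x, max (f n x / n) a ∂μ) atTop (𝓝 a) := by
    have hbound : ∀ᶠ n : ℕ in atTop, ∀ᵐ x ∂μ, ‖max (f n x / n) a‖ ≤ |K| + |a| := by
      filter_upwards [eventually_ge_atTop 1] with n hn
      filter_upwards [hs] with x hx
      have hle : f n x / n ≤ K :=
        (div_le_iff₀' (by positivity)).2 (hf.apply_le_mul hmaps hK hn hx)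
      rw [Real.norm_eq_abs, abs_le]
      constructor
      · linarith [le_max_right (f n x / n) a, neg_abs_le a, abs_nonneg K]
      · refine max_le ?_ ?_ <;>
          linarith [le_abs_self K, le_abs_self a, abs_nonneg K, abs_nonneg a]
    have hlim' : ∀ᵐ x ∂μ, Tendsto (fun n : ℕ ↦ max (f n x / n) a) atTop (𝓝 a) := by
      filter_upwards [hlim] with x hx
      simpa using hx.max (tendsto_const_nhds (x := a))
    simpa using tendsto_integral_filter_of_dominated_convergence (fun _ ↦ |K| + |a|)
      (.of_forall fun n ↦
        (((hint n).div_const n).sup (integrable_const a)).aestronglyMeasurable)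
      hbound (integrable_const _) hlim'
  obtain ⟨m, hm, hm0⟩ := ((hmax.eventually_lt_const hac).and (eventually_ne_atTop 0)).exists
  refine ⟨m, hm0, ?_⟩
  have hm_pos : (0 : ℝ) < m := by positivity
  rw [← div_lt_iff₀' hm_pos, ← integral_div]
  exact (integral_mono ((hint m).div_const m) (((hint m).div_const m).sup (integrable_const a))
    fun x ↦ le_max_left _ _).trans_lt hm

section UniquelyErgodic

variable [TopologicalSpace X] [TopologicalSpace.MetrizableSpace X] [MeasurableSpace X]
  [BorelSpace X] {μ : Measure X}

theorem eventually_forall_lt_of_integral_lt (hf : SubadditiveCocycleOn F s f)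
    (hμ : UniquelyErgodicOn F s μ) (hs : IsCompact s) (hmaps : MapsTo F s s)
    (hF : ContinuousOn F s) (hfc : ∀ n, ContinuousOn (f n) s) {m : ℕ} (hm : m ≠ 0) {c : ℝ}
    (hmc : ∫ x, f m x ∂μ < m * c) : ∀ᶠ n : ℕ in atTop, ∀ x ∈ s, f n x < n * c := by
  obtain ⟨C, hC⟩ := (Set.finite_Iic m).bddAbove_biUnion.2 fun k _ ↦ hs.bddAbove_image (hfc k)
  replace hC : ∀ k ≤ m, ∀ x ∈ s, f k x ≤ C := fun k hk x hx ↦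
    hC (mem_biUnion hk (mem_image_of_mem _ hx))
  have hm_pos : (0 : ℝ) < m := by positivity
  obtain ⟨b, hb, hbc⟩ := exists_between hmc
  have hbirkhoff : ∀ᶠ n : ℕ in atTop, ∀ x ∈ s, birkhoffAverage ℝ F (f m) n x < b := by
    filter_upwards [Metric.tendstoUniformlyOn_iff.1
      (hμ.tendstoUniformlyOn_birkhoffAverage hs hmaps hF (hfc m)) _ (sub_pos.2 hb)] with n hn x hx
    linarith [neg_lt_of_abs_lt (hn x hx)]
  have hlarge : ∀ᶠ n : ℕ in atTop, 2 * (m * C) - m * (m * c) < n * (m * c - b) :=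
    (tendsto_natCast_atTop_atTop.atTop_mul_const (sub_pos.2 hbc)).eventually_gt_atTop _
  rw [← map_add_atTop_eq_nat m, eventually_map]
  filter_upwards [hbirkhoff, hlarge, eventually_gt_atTop 0] with n hn hlarge hn0 x hx
  have hsum : birkhoffSum F (f m) n x < n * b := by
    have := hn x hx
    rwa [birkhoffAverage, smul_eq_mul, inv_mul_lt_iff₀ (by positivity)] at this
  refine lt_of_mul_lt_mul_left ?_ hm_pos.le
  calc m * f (n + m) x ≤ birkhoffSum F (f m) n x + 2 * (m * C) :=
        hf.mul_apply_add_le hmaps hC n hx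
    _ < n * b + (n * (m * c - b) + m * (m * c)) := by linarith
    _ = m * ((n + m : ℕ) * c) := by push_cast; ring

theorem eventually_forall_lt (hf : SubadditiveCocycleOn F s f)
    (hμ : UniquelyErgodicOn F s μ) (hs : IsCompact s) (hmaps : MapsTo F s s)
    (hF : ContinuousOn F s) (hfc : ∀ n, ContinuousOn (f n) s) {a c : ℝ}
    (hlim : ∀ᵐ x ∂μ, Tendsto (fun n ↦ f n x / n) atTop (𝓝 a)) (hac : a < c) :
    ∀ᶠ n : ℕ in atTop, ∀ x ∈ s, f n x < n * c := by
  have := hμ.isProbabilityMeasure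
  obtain ⟨K, hK⟩ := hs.bddAbove_image (hfc 1)
  obtain ⟨m, hm, hmc⟩ := hf.exists_integral_lt hmaps hμ.ae_mem
    (fun n ↦ hμ.integrable_of_continuousOn hs (hfc n))
    (fun x hx ↦ hK (mem_image_of_mem _ hx)) hlim hac
  exact hf.eventually_forall_lt_of_integral_lt hμ hs hmaps hF hfc hm hmc

end UniquelyErgodic

end SubadditiveCocycleOn

end SubadditiveCocycle

section HadamardInequality

variable {E : Type*} [NormedAddCommGroup E] [InnerProductSpace ℝ E]

theorem abs_det_le_prod_norm_apply_orthonormalBasis {n : ℕ} (b : OrthonormalBasis (Fin n) ℝ E)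
    (A : E →ₗ[ℝ] E) : |LinearMap.det A| ≤ ∏ i, ‖A (b i)‖ := by
  have : Fact (Module.finrank ℝ E = n) := ⟨by simpa using Module.finrank_eq_card_basis b.toBasis⟩
  let o := b.toBasis.orientation
  have hvol : o.volumeForm = b.toBasis.det := o.volumeForm_robust b rfl
  have hdet : o.volumeForm (A ∘ b) = LinearMap.det A := by
    rw [hvol, ← b.coe_toBasis, b.toBasis.det_comp, b.toBasis.det_self, mul_one]
  simpa [hdet] using o.abs_volumeForm_apply_le (A ∘ b)

theorem abs_det_le_norm_apply_mul_opNorm_pow {n : ℕ} (hn : Module.finrank ℝ E = n + 1)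
    (A : E →L[ℝ] E) {v : E} (hv : ‖v‖ = 1) :
    |LinearMap.det A.toLinearMap| ≤ ‖A v‖ * ‖A‖ ^ n := by
  have : FiniteDimensional ℝ E := Module.finite_of_finrank_eq_succ hn
  obtain ⟨b, hb⟩ := Orthonormal.exists_orthonormalBasis_extension_of_card_eq (𝕜 := ℝ)
    (ι := Fin (n + 1)) (v := fun _ ↦ v) (s := {0}) (by simpa using hn)
    (by simp [orthonormal_subsingleton_iff, hv])
  have hb0 : b 0 = v := hb 0 (mem_singleton 0)
  calc |LinearMap.det A.toLinearMap| ≤ ‖A (b 0)‖ * ∏ i : Fin n, ‖A (b i.succ)‖ := by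
        simpa [Fin.prod_univ_succ] using abs_det_le_prod_norm_apply_orthonormalBasis b A
    _ ≤ ‖A v‖ * ∏ _i : Fin n, ‖A‖ := by
        rw [hb0]
        gcongr with i
        simpa using A.le_opNorm (b i.succ)
    _ = ‖A v‖ * ‖A‖ ^ n := by simp

end HadamardInequality

section IterateDerivative

open Topology

variable {𝕜 E : Type*} [NontriviallyNormedField 𝕜] [NormedAddCommGroup E] [NormedSpace 𝕜 E]
  {F : E → E} {s : Set E}

theorem differentiableAt_iterate_of_mapsTo (hF : ∀ x ∈ s, DifferentiableAt 𝕜 F x)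
    (hmaps : MapsTo F s s) (n : ℕ) {x : E} (hx : x ∈ s) : DifferentiableAt 𝕜 F^[n] x := by
  induction n with
  | zero => exact differentiableAt_id
  | succ n ih =>
    rw [iterate_succ']
    exact (hF _ (hmaps.iterate n hx)).comp x ih

theorem fderiv_iterate_add (hF : ∀ x ∈ s, DifferentiableAt 𝕜 F x) (hmaps : MapsTo F s s)
    (m n : ℕ) {x : E} (hx : x ∈ s) :
    fderiv 𝕜 F^[m + n] x = (fderiv 𝕜 F^[n] (F^[m] x)).comp (fderiv 𝕜 F^[m] x) := by
  rw [add_comm, iterate_add]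
  exact fderiv_comp x (differentiableAt_iterate_of_mapsTo hF hmaps n (hmaps.iterate m hx))
    (differentiableAt_iterate_of_mapsTo hF hmaps m hx)

theorem continuousOn_fderiv_iterate (hF : ∀ x ∈ s, DifferentiableAt 𝕜 F x) (hmaps : MapsTo F s s)
    (hdF : ContinuousOn (fderiv 𝕜 F) s) (n : ℕ) : ContinuousOn (fderiv 𝕜 F^[n]) s := by
  induction n with
  | zero => exact (continuousOn_const (c := ContinuousLinearMap.id 𝕜 E)).congr fun _ _ ↦ fderiv_id
  | succ n ih =>
    have hFc : ContinuousOn F s := fun x hx ↦ (hF x hx).continuousAt.continuousWithinAt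
    exact ((hdF.comp (hFc.iterate hmaps n) (hmaps.iterate n)).clm_comp ih).congr fun x hx ↦
      fderiv_iterate_add hF hmaps n 1 hx

theorem det_fderiv_iterate (hF : ∀ x ∈ s, DifferentiableAt 𝕜 F x) (hmaps : MapsTo F s s)
    (n : ℕ) {x : E} (hx : x ∈ s) :
    (fderiv 𝕜 F^[n] x).det = ∏ k ∈ Finset.range n, (fderiv 𝕜 F (F^[k] x)).det := by
  induction n with
  | zero => simp [ContinuousLinearMap.det]
  | succ n ih =>
    rw [fderiv_iterate_add hF hmaps n 1 hx, Finset.prod_range_succ, ← ih, mul_comm, iterate_one]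
    exact LinearMap.det_comp _ _

theorem subadditiveCocycleOn_log_norm_fderiv_iterate (hF : ∀ x ∈ s, DifferentiableAt 𝕜 F x)
    (hmaps : MapsTo F s s) (hne : ∀ n, ∀ x ∈ s, fderiv 𝕜 F^[n] x ≠ 0) :
    SubadditiveCocycleOn F s fun n x ↦ log ‖fderiv 𝕜 F^[n] x‖ := by
  intro m n x hx
  have hpos (k : ℕ) {y : E} (hy : y ∈ s) : 0 < ‖fderiv 𝕜 F^[k] y‖ := norm_pos_iff.2 (hne k y hy)
  calc log ‖fderiv 𝕜 F^[m + n] x‖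
      ≤ log (‖fderiv 𝕜 F^[n] (F^[m] x)‖ * ‖fderiv 𝕜 F^[m] x‖) := by
        refine log_le_log (hpos _ hx) ?_
        rw [fderiv_iterate_add hF hmaps m n hx]
        exact ContinuousLinearMap.opNorm_comp_le _ _
    _ = log ‖fderiv 𝕜 F^[m] x‖ + log ‖fderiv 𝕜 F^[n] (F^[m] x)‖ := by
        rw [log_mul (hpos n (hmaps.iterate m hx)).ne' (hpos m hx).ne', add_comm]

theorem eventually_log_norm_fderiv_iterate_lt [MeasurableSpace E] [BorelSpace E] {μ : Measure E}
    (hF : ∀ x ∈ s, DifferentiableAt 𝕜 F x) (hdF : ContinuousOn (fderiv 𝕜 F) s)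
    (hne : ∀ n, ∀ x ∈ s, fderiv 𝕜 F^[n] x ≠ 0) (hs : IsCompact s) (hmaps : MapsTo F s s)
    (hμ : UniquelyErgodicOn F s μ) {a c : ℝ}
    (hlim : ∀ᵐ x ∂μ, Tendsto (fun n ↦ log ‖fderiv 𝕜 F^[n] x‖ / n) atTop (𝓝 a))
    (hac : a < c) : ∀ᶠ n : ℕ in atTop, ∀ x ∈ s, log ‖fderiv 𝕜 F^[n] x‖ < n * c :=
  (subadditiveCocycleOn_log_norm_fderiv_iterate hF hmaps hne).eventually_forall_lt hμ hs hmaps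
    (fun x hx ↦ (hF x hx).continuousAt.continuousWithinAt)
    (fun n ↦ (continuousOn_fderiv_iterate hF hmaps hdF n).norm.log fun x hx ↦
      norm_ne_zero_iff.2 (hne n x hx)) hlim hac

end IterateDerivative

section Jacobian

variable {F : E2 → E2} {s : Set E2}

theorem jacAt_iterate_pos (hF : ∀ p ∈ s, DifferentiableAt ℝ F p) (hmaps : MapsTo F s s)
    (hjac : ∀ p ∈ s, 0 < jacAt F p) (n : ℕ) {p : E2} (hp : p ∈ s) : 0 < jacAt F^[n] p :=
  (Finset.prod_pos fun k _ ↦ hjac _ (hmaps.iterate k hp)).trans_eq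
    (det_fderiv_iterate hF hmaps n hp).symm

theorem log_jacAt_iterate (hF : ∀ p ∈ s, DifferentiableAt ℝ F p) (hmaps : MapsTo F s s)
    (hjac : ∀ p ∈ s, 0 < jacAt F p) (n : ℕ) {p : E2} (hp : p ∈ s) :
    log (jacAt F^[n] p) = birkhoffSum F (fun q ↦ log (jacAt F q)) n p :=
  (congrArg log (det_fderiv_iterate hF hmaps n hp)).trans
    (log_prod fun k _ ↦ (hjac _ (hmaps.iterate k hp)).ne')

theorem continuousOn_log_jacAt (hdF : ContinuousOn (fderiv ℝ F) s)
    (hjac : ∀ p ∈ s, 0 < jacAt F p) : ContinuousOn (fun p ↦ log (jacAt F p)) s :=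
  (ContinuousLinearMap.continuous_det.comp_continuousOn hdF).log fun p hp ↦ (hjac p hp).ne'

theorem fderiv_ne_zero_of_jacAt_ne_zero {p : E2} (h : jacAt F p ≠ 0) : fderiv ℝ F p ≠ 0 := by
  intro h0
  simp [jacAt, h0] at h

end Jacobian

section Homogeneity

open Topology

variable {Λ : Set E2}

theorem homog_of_log_bounds {G : E2 → E2} {ρ η : ℝ} (hρ : 0 < ρ)
    (hjac : ∀ p ∈ Λ, 0 < jacAt G p)
    (hlogjac : ∀ p ∈ Λ, |log (jacAt G p) - log ρ| < η * -log ρ / 2)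
    (hlognorm : ∀ p ∈ Λ, log ‖fderiv ℝ G p‖ < η * -log ρ / 2) : Homog G Λ ρ η := by
  intro p hp
  have hdet_pos := hjac p hp
  have hnorm_pos : 0 < ‖fderiv ℝ G p‖ :=
    norm_pos_iff.2 (fderiv_ne_zero_of_jacAt_ne_zero hdet_pos.ne')
  have hlognorm := hlognorm p hp
  obtain ⟨hlower, hupper⟩ := abs_lt.1 (hlogjac p hp)
  refine ⟨fun v hv ↦ ?_, ?_, ?_⟩
  · have hHadamard : jacAt G p ≤ ‖fderiv ℝ G p v‖ * ‖fderiv ℝ G p‖ := by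
      simpa only [jacAt, pow_one] using (le_abs_self _).trans
        (abs_det_le_norm_apply_mul_opNorm_pow (n := 1) finrank_euclideanSpace_fin
          (fderiv ℝ G p) hv)
    have hv_pos : 0 < ‖fderiv ℝ G p v‖ :=
      pos_of_mul_pos_left (hdet_pos.trans_le hHadamard) hnorm_pos.le
    have hlogHadamard : log (jacAt G p) ≤ log ‖fderiv ℝ G p v‖ + log ‖fderiv ℝ G p‖ :=
      (log_le_log hdet_pos hHadamard).trans_eq (log_mul hv_pos.ne' hnorm_pos.ne')
    have hlog_apply_le : log ‖fderiv ℝ G p v‖ ≤ log ‖fderiv ℝ G p‖ :=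
      log_le_log hv_pos (by simpa [hv] using (fderiv ℝ G p).le_opNorm v)
    rw [rpow_lt_iff_lt_log hρ hv_pos, lt_rpow_iff_log_lt hv_pos hρ]
    constructor <;> linarith
  · rw [rpow_lt_iff_lt_log hρ hdet_pos]
    linarith
  · rw [lt_rpow_iff_log_lt hdet_pos hρ]
    linarith

theorem eventually_abs_log_jacAt_iterate_sub_lt {F : E2 → E2} {μ : Measure E2}
    (hF : ∀ p ∈ Λ, DifferentiableAt ℝ F p) (hdF : ContinuousOn (fderiv ℝ F) Λ)
    (hjac : ∀ p ∈ Λ, 0 < jacAt F p) (hΛ : IsCompact Λ) (hmaps : MapsTo F Λ Λ)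
    (hμ : UniquelyErgodicOn F Λ μ) {ε : ℝ} (hε : 0 < ε) :
    ∀ᶠ n : ℕ in atTop, ∀ p ∈ Λ,
      |log (jacAt F^[n] p) - n * ∫ q, log (jacAt F q) ∂μ| < n * ε := by
  have hFc : ContinuousOn F Λ := fun p hp ↦ (hF p hp).continuousAt.continuousWithinAt
  filter_upwards [Metric.tendstoUniformlyOn_iff.1 (hμ.tendstoUniformlyOn_birkhoffAverage hΛ hmaps
    hFc (continuousOn_log_jacAt hdF hjac)) ε hε, eventually_gt_atTop 0] with n hn hn0 p hp
  have hn_pos : (0 : ℝ) < n := Nat.cast_pos.2 hn0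
  have hsum : log (jacAt F^[n] p) = n * birkhoffAverage ℝ F (fun q ↦ log (jacAt F q)) n p := by
    rw [log_jacAt_iterate hF hmaps hjac n hp, birkhoffAverage, smul_eq_mul,
      mul_inv_cancel_left₀ hn_pos.ne']
  rw [hsum, ← mul_sub, abs_mul, abs_of_pos hn_pos, abs_sub_comm]
  exact mul_lt_mul_of_pos_left (hn p hp) hn_pos

theorem homogeneity_from_unique_ergodicity_general {F : E2 → E2} {μ : Measure E2} {lam : ℝ}
    (hF : ∀ p ∈ Λ, DifferentiableAt ℝ F p) (hdF : ContinuousOn (fderiv ℝ F) Λ)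
    (hjac : ∀ p ∈ Λ, 0 < jacAt F p) (hΛ : IsCompact Λ)
    (hmaps : MapsTo F Λ Λ) (hlam : 0 < lam) (hlam1 : lam < 1) (hμ : UniquelyErgodicOn F Λ μ)
    (hintegral : ∫ p, log (jacAt F p) ∂μ = log lam)
    (hlyap : ∀ᵐ p ∂μ, Tendsto (fun n ↦ log ‖fderiv ℝ F^[n] p‖ / n) atTop (𝓝 0))
    {η : ℝ} (hη : 0 < η) : ∀ᶠ n in atTop, Homog F^[n] Λ (lam ^ n) η := by
  have hjac_iterate (n : ℕ) : ∀ p ∈ Λ, 0 < jacAt F^[n] p := fun p hp ↦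
    jacAt_iterate_pos hF hmaps hjac n hp
  have hε : 0 < η * -log lam / 2 := half_pos (mul_pos hη (neg_pos.2 (log_neg hlam hlam1)))
  have hrate (n : ℕ) : η * -log (lam ^ n) / 2 = n * (η * -log lam / 2) := by
    rw [log_pow]
    ring
  filter_upwards [eventually_abs_log_jacAt_iterate_sub_lt hF hdF hjac hΛ hmaps hμ hε,
    eventually_log_norm_fderiv_iterate_lt hF hdF
      (fun n p hp ↦ fderiv_ne_zero_of_jacAt_ne_zero (hjac_iterate n p hp).ne') hΛ hmaps hμ
      hlyap hε] with n hlogjac hlognorm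
  refine homog_of_log_bounds (pow_pos hlam n) (hjac_iterate n) (fun p hp ↦ ?_) fun p hp ↦ ?_
  · rw [hrate, log_pow]
    simpa only [hintegral] using hlogjac p hp
  · rw [hrate]
    exact hlognorm p hp

end Homogeneity

/-- **Homogeneity of large iterates from unique ergodicity.**
Let `F` be an orientation-preserving `C^r`-diffeomorphism (`r ≥ 2`) of a domain `Ω ⊆ ℝ²`
onto its image `F(Ω) ⊆ Ω`, and `Λ ⊆ Ω` a compact totally invariant set on which `F` is
uniquely ergodic with invariant probability measure `μ`. If `∫ log Jac_p F dμ = log λ` with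
`λ ∈ (0,1)` and for `μ`-a.e. `p` we have `(1/n) log ‖D_pFⁿ‖ → 0`, then for every `η > 0`
there is `N` such that for all `n ≥ N` the iterate `Fⁿ` is `η`-homogeneous on `Λ` with rate
`λⁿ`. -/
theorem homogeneity_from_unique_ergodicity (r : ℕ) (hr : 2 ≤ r)
    (Ω : Set E2) (F : E2 → E2) (Λ : Set E2) (lam : ℝ) (μ : Measure E2)
    (hΩ : IsOpen Ω) (hF : ContDiffOn ℝ r F Ω) (hFinj : Set.InjOn F Ω)
    (hFmaps : Set.MapsTo F Ω Ω) (horient : ∀ x ∈ Ω, 0 < jacAt F x)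
    (hΛΩ : Λ ⊆ Ω) (hΛc : IsCompact Λ) (hΛinv : F '' Λ = Λ)
    (hlam : 0 < lam) (hlam1 : lam < 1)
    (hμ : IsProbabilityMeasure μ) (hsupp : μ Λᶜ = 0)
    (hμinv : ∀ s : Set E2, MeasurableSet s → μ (F ⁻¹' s) = μ s)
    (huniq : ∀ ν : Measure E2, IsProbabilityMeasure ν → ν Λᶜ = 0 →
      (∀ s : Set E2, MeasurableSet s → ν (F ⁻¹' s) = ν s) → ν = μ)
    (hintegral : ∫ p, Real.log (jacAt F p) ∂μ = Real.log lam)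
    (hlyap : ∀ᵐ p ∂μ, Filter.Tendsto
      (fun n : ℕ => Real.log ‖fderiv ℝ (F^[n]) p‖ / (n : ℝ))
      Filter.atTop (nhds 0)) :
    ∀ η : ℝ, 0 < η → ∃ N : ℕ, ∀ n : ℕ, N ≤ n →
      Homog (F^[n]) Λ (lam ^ n) η := by
  have hFdiff : ∀ p ∈ Λ, ContDiffAt ℝ 1 F p := fun p hp ↦
    (hF.contDiffAt (hΩ.mem_nhds (hΛΩ hp))).of_le (by exact_mod_cast one_le_two.trans hr)
  intro η hη
  exact eventually_atTop.1 (homogeneity_from_unique_ergodicity_general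
    (fun p hp ↦ (hFdiff p hp).differentiableAt one_ne_zero)
    (fun p hp ↦ ((hFdiff p hp).continuousAt_fderiv one_ne_zero).continuousWithinAt)
    (fun p hp ↦ horient p (hΛΩ hp)) hΛc (mapsTo_iff_image_subset.2 hΛinv.subset) hlam hlam1
    ⟨hμ, hsupp, hμinv, huniq⟩ hintegral hlyap hη)
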